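/- Let (M,g,φ,ξ,η) be a (2n+1)-dimensional para-Sasaki-like Riemannian manifold with generalized symmetric metric connection ∇̄. Then for every smooth function f, the Laplacians satisfy Δ̄f = Δf − 2nα (ξf), where Δ̄ is the Laplacian with respect to ∇̄ and Δ is the Laplacian of the Levi-Civita connection. -/

import Mathlib

/-- Abstract algebraic model of an almost paracontact almost paracomplex
Riemannian (apapR) manifold of dimension `2 n + 1`.  Here `R` plays the role of
the commutative ring of smooth functions `C^∞(M)` and `V` the `R`-module of
vector fields.  `act x f` is the derivative `x(f)` of a function along a vector
field, `bracket` is the Lie bracket, `g` the Riemannian metric, `(phi, xi, eta)`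
the almost paracontact almost paracomplex structure, `nab` the Levi-Civita
connection of `g` and `e` a (local) orthonormal frame with `e 0 = xi`. -/
structure ApapR (R V : Type*) [CommRing R] [Algebra ℝ R]
    [AddCommGroup V] [Module R V] where
  n : ℕ
  act : V → R → R
  bracket : V → V → V
  g : V → V → R
  phi : V → V
  xi : V
  eta : V → R
  nab : V → V → V
  e : Fin (2 * n + 1) → V
  act_addl : ∀ x y f, act (x + y) f = act x f + act y f
  act_smull : ∀ (h : R) (x : V) f, act (h • x) f = h * act x f
  act_addr : ∀ x f h, act x (f + h) = act x f + act x h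
  act_mul : ∀ x f h, act x (f * h) = f * act x h + h * act x f
  g_symm : ∀ x y, g x y = g y x
  g_addl : ∀ x y z, g (x + y) z = g x z + g y z
  g_smull : ∀ (f : R) x y, g (f • x) y = f * g x y
  phi_add : ∀ x y, phi (x + y) = phi x + phi y
  phi_smul : ∀ (f : R) x, phi (f • x) = f • phi x
  eta_eq : ∀ x, eta x = g x xi
  -- apapR structure axioms
  eta_xi : eta xi = 1
  phi_phi : ∀ x, phi (phi x) = x - eta x • xi
  phi_xi : phi xi = 0
  g_phi_phi : ∀ x y, g (phi x) (phi y) = g x y - eta x * eta y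
  -- orthonormal frame, `tr φ = 0`
  e_zero : e 0 = xi
  e_orthonormal : ∀ i j, g (e i) (e j) = if i = j then 1 else 0
  trace_phi : (∑ i, g (phi (e i)) (e i)) = 0
  -- Levi-Civita connection axioms
  nab_addl : ∀ x y z, nab (x + y) z = nab x z + nab y z
  nab_smull : ∀ (f : R) x y, nab (f • x) y = f • nab x y
  nab_addr : ∀ x y z, nab x (y + z) = nab x y + nab x z
  nab_leibniz : ∀ x (f : R) y, nab x (f • y) = f • nab x y + act x f • y
  nab_metric : ∀ x y z, act x (g y z) = g (nab x y) z + g y (nab x z)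
  nab_torsion : ∀ x y, nab x y - nab y x = bracket x y

namespace ApapR

variable {R V : Type*} [CommRing R] [Algebra ℝ R] [AddCommGroup V] [Module R V]

/-- The para-Sasaki-like condition `(∇_x φ)y = −g(x,y)ξ − η(y)x + 2η(x)η(y)ξ`. -/
def IsParaSasakiLike (S : ApapR R V) : Prop :=
  ∀ x y, S.nab x (S.phi y) - S.phi (S.nab x y)
    = -(S.g x y • S.xi) - S.eta y • x + (2 * S.eta x * S.eta y) • S.xi

/-- The generalized symmetric metric connection
`∇̄_x y = ∇_x y + α{g(x,y)ξ − η(y)x} + β{g(φx,y)ξ − η(y)φx}`. -/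
def gsmc (S : ApapR R V) (α β : R) (x y : V) : V :=
  S.nab x y + (α * S.g x y) • S.xi - (α * S.eta y) • x
    + (β * S.g (S.phi x) y) • S.xi - (β * S.eta y) • S.phi x

/-- Curvature tensor of a connection `D`:
`R_D(x,y)z = D_x D_y z − D_y D_x z − D_[x,y] z`. -/
def curv (S : ApapR R V) (D : V → V → V) (x y z : V) : V :=
  D x (D y z) - D y (D x z) - D (S.bracket x y) z

/-- Ricci tensor of a connection `D` with respect to the orthonormal frame. -/
def ric (S : ApapR R V) (D : V → V → V) (x y : V) : R :=
  ∑ i, S.g (S.curv D (S.e i) x y) (S.e i)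

/-- Scalar curvature of a connection `D`. -/
def scal (S : ApapR R V) (D : V → V → V) : R :=
  ∑ i, S.ric D (S.e i) (S.e i)

/-- Divergence of a vector field with respect to a connection `D`. -/
def divg (S : ApapR R V) (D : V → V → V) (x : V) : R :=
  ∑ i, S.g (D (S.e i) x) (S.e i)

/-- The associated metric `g̃(x,y) = g(x,φy) + η(x)η(y)`. -/
def tg (S : ApapR R V) (x y : V) : R := S.g x (S.phi y) + S.eta x * S.eta y

/-- A function is constant iff all its derivatives vanish. -/
def IsConstant (S : ApapR R V) (f : R) : Prop := ∀ x, S.act x f = 0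

end ApapR

namespace ApapR

variable {R V : Type*} [CommRing R] [Algebra ℝ R] [AddCommGroup V] [Module R V]

/-!
The difference `∇̄_x y − ∇_x y` is `α (ξ ∧ x) y + β (ξ ∧ φx) y`, where `u ∧ v` is the endomorphism
`y ↦ g(v,y)u − g(u,y)v`. For an endomorphism `A`, the trace of `x ↦ (ξ ∧ Ax) y` is
`g(Aξ,y) − η(y) tr A`. This is `−2n η(y)` for `A = id` and `0` for `A = φ`, because `φξ = 0` and
`tr φ = 0`. With `y = grad f` one has `η(y) = ξf`.
-/

section

variable (S : ApapR R V)

/-- The trace of an endomorphism `A` of the module of vector fields, computed in the orthonormal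
frame `e`. Linearity of `A` is not built in, so that it applies directly to `x ↦ D_x y`. -/
def frameTrace (A : V → V) : R := ∑ i, S.g (A (S.e i)) (S.e i)

/-- The action on `y` of the `g`-skew endomorphism `u ∧ v` attached to two vector fields, with the
sign convention `(u ∧ v) y = g(v,y)u − g(u,y)v`. -/
def wedge (u v y : V) : V := S.g v y • u - S.g u y • v

lemma g_sub_left (x y z : V) : S.g (x - y) z = S.g x z - S.g y z := by
  rw [eq_sub_iff_add_eq, ← S.g_addl, sub_add_cancel]

lemma g_zero_left (y : V) : S.g 0 y = 0 := by
  simpa only [zero_smul, zero_mul] using S.g_smull 0 0 y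

lemma g_xi_left (y : V) : S.g S.xi y = S.eta y := by
  rw [S.eta_eq, S.g_symm]

lemma g_xi_e (i : Fin (2 * S.n + 1)) : S.g S.xi (S.e i) = if 0 = i then 1 else 0 := by
  rw [← S.e_zero, S.e_orthonormal]

lemma frameTrace_add (A B : V → V) :
    S.frameTrace (fun x ↦ A x + B x) = S.frameTrace A + S.frameTrace B := by
  simp only [frameTrace, S.g_addl, Finset.sum_add_distrib]

lemma frameTrace_sub (A B : V → V) :
    S.frameTrace (fun x ↦ A x - B x) = S.frameTrace A - S.frameTrace B := by
  simp only [frameTrace, S.g_sub_left, Finset.sum_sub_distrib]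

lemma frameTrace_smul (c : R) (A : V → V) :
    S.frameTrace (fun x ↦ c • A x) = c * S.frameTrace A := by
  simp only [frameTrace, S.g_smull, Finset.mul_sum]

lemma frameTrace_id : S.frameTrace (fun x ↦ x) = 2 * (S.n : R) + 1 := by
  simp [frameTrace, S.e_orthonormal]

lemma frameTrace_phi : S.frameTrace S.phi = 0 := S.trace_phi

lemma frameTrace_smul_xi (h : V → R) : S.frameTrace (fun x ↦ h x • S.xi) = h S.xi := by
  simp [frameTrace, S.g_smull, S.g_xi_e, S.e_zero]

lemma frameTrace_wedge_xi (A : V → V) (y : V) :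
    S.frameTrace (fun x ↦ S.wedge S.xi (A x) y)
      = S.g (A S.xi) y - S.eta y * S.frameTrace A := by
  simp only [wedge, S.g_xi_left, frameTrace_sub, frameTrace_smul]
  rw [S.frameTrace_smul_xi fun x ↦ S.g (A x) y]

lemma frameTrace_wedge_xi_id (y : V) :
    S.frameTrace (fun x ↦ S.wedge S.xi x y) = -(2 * (S.n : R) * S.eta y) := by
  rw [S.frameTrace_wedge_xi (fun x ↦ x), frameTrace_id, g_xi_left]
  ring

lemma frameTrace_wedge_xi_phi (y : V) :
    S.frameTrace (fun x ↦ S.wedge S.xi (S.phi x) y) = 0 := by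
  rw [frameTrace_wedge_xi, frameTrace_phi, S.phi_xi, g_zero_left, mul_zero, sub_zero]

lemma gsmc_eq_nab_add_wedge (α β : R) (x y : V) :
    S.gsmc α β x y
      = S.nab x y + α • S.wedge S.xi x y + β • S.wedge S.xi (S.phi x) y := by
  simp only [gsmc, wedge, S.g_xi_left, smul_sub, smul_smul]
  abel

lemma divg_eq_frameTrace (D : V → V → V) (y : V) :
    S.divg D y = S.frameTrace (fun x ↦ D x y) := rfl

theorem divg_gsmc (α β : R) (y : V) :
    S.divg (S.gsmc α β) y = S.divg S.nab y - 2 * (S.n : R) * α * S.eta y := by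
  simp only [divg_eq_frameTrace, gsmc_eq_nab_add_wedge, frameTrace_add, frameTrace_smul,
    frameTrace_wedge_xi_id, frameTrace_wedge_xi_phi]
  ring

lemma eta_grad {f : R} {gf : V} (hgf : ∀ x, S.g gf x = S.act x f) :
    S.eta gf = S.act S.xi f := by
  rw [S.eta_eq, hgf]

theorem laplace_gsmc_eq_general (α β f : R) (gf : V) (hgf : ∀ x, S.g gf x = S.act x f) :
    S.divg (S.gsmc α β) gf
      = S.divg S.nab gf - 2 * (S.n : R) * α * S.act S.xi f := by
  rw [divg_gsmc, S.eta_grad hgf]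

end

/-- the Laplacians with respect to `∇̄` and `∇` satisfy
`Δ̄f = Δf − 2nα(ξf)`.  Here `gf` is the `g`-gradient of `f` and the Laplacian
of `f` with respect to a connection `D` is `div_D (grad f)`. -/
theorem laplace_gsmc_eq (S : ApapR R V) (hS : S.IsParaSasakiLike) (α β : R)
    (f : R) (gf : V) (hgf : ∀ x, S.g gf x = S.act x f) :
    S.divg (S.gsmc α β) gf
      = S.divg S.nab gf - 2 * (S.n : R) * α * S.act S.xi f :=
  S.laplace_gsmc_eq_general α β f gf hgf

end ApapR
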